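/- Let x ∈ ℝ^n have i.i.d. Bernoulli–Gaussian(θ) entries and let p, q be unit vectors in ℝ^n. Then P(sign(⟨p,x⟩) ≠ sign(⟨q,x⟩)) = (1/π)·E_Ω[angle(p_Ω, q_Ω)], where Ω is the random support of x, provided events where exactly one of ⟨p,x⟩, ⟨q,x⟩ vanishes have probability zero conditional on each Ω (which holds since the conditional laws are Gaussian). -/

import Mathlib

open MeasureTheory ProbabilityTheory Finset

/-- The Bernoulli–Gaussian distribution BG(θ) on ℝ. -/
noncomputable def bg (θ : ℝ) : Measure ℝ :=
  (Real.toNNReal (1 - θ)) • Measure.dirac 0 + (Real.toNNReal θ) • gaussianReal 0 1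

instance (θ : ℝ) : IsFiniteMeasure (bg θ) := by unfold bg; infer_instance

/-- Angle between two vectors in ℝ^k, with the convention that the angle
    involving a zero vector is 0. -/
noncomputable def ang {k : ℕ} (x y : Fin k → ℝ) : ℝ :=
  if x = 0 ∨ y = 0 then 0
  else Real.arccos ((∑ i, x i * y i) /
    (Real.sqrt (∑ i, x i ^ 2) * Real.sqrt (∑ i, y i ^ 2)))

/-- The restriction of a vector to a subset of coordinates (zero elsewhere). -/
def restrict {k : ℕ} (x : Fin k → ℝ) (Ω : Finset (Fin k)) : Fin k → ℝ :=
  fun i => if i ∈ Ω then x i else 0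

open scoped Real RealInnerProductSpace

/-!
Conditionally on its support `Ω`, a Bernoulli–Gaussian vector is `z` restricted to `Ω` for a
standard Gaussian `z`, and `⟨p, z_Ω⟩ = ⟨p_Ω, z⟩`. So the claim reduces to the fact that, for
nonzero `a` and `b`, `⟨a, z⟩` and `⟨b, z⟩` have different signs with probability `angle a b / π`.
Their joint law depends only on the Gram matrix of `a` and `b`, so these may be taken to be vectors
in the plane; there the standard Gaussian is rotation invariant, hence has a uniformly distributed
argument, and `⟨b, z⟩ < 0 < ⟨a, z⟩` says that this argument lies in an arc of length `angle a b`.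
-/

section RotationInvariant

variable {μ : Measure ℂ} [IsProbabilityMeasure μ] {A : Set ℂ}

theorem measure_eq_haarAddCircle_of_rotation_invariant
    (hrot : ∀ c : Circle, MeasurePreserving (fun z : ℂ => c * z) μ μ) (hzero : μ {0} = 0)
    (hA : MeasurableSet A) (hcone : ∀ r : ℝ, 0 < r → ∀ z : ℂ, r * z ∈ A ↔ z ∈ A)
    {T : ℝ} [hT : Fact (0 < T)] :
    μ A = AddCircle.haarAddCircle {θ : AddCircle T | (θ.toCircle : ℂ) ∈ A} := by
  have hmeas : MeasurableSet {w : AddCircle T × ℂ | (w.1.toCircle : ℂ) * w.2 ∈ A} := by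
    have := AddCircle.continuous_toCircle (T := T)
    exact Continuous.measurable (by fun_prop) hA
  have hfiber : ∀ z ≠ 0, AddCircle.haarAddCircle {θ : AddCircle T | (θ.toCircle : ℂ) * z ∈ A} =
      AddCircle.haarAddCircle {θ : AddCircle T | (θ.toCircle : ℂ) ∈ A} := by
    intro z hz
    obtain ⟨α, hα⟩ := (AddCircle.homeomorphCircle hT.out.ne').surjective (Circle.exp z.arg)
    rw [AddCircle.homeomorphCircle_apply] at hα
    have hrotate (θ : AddCircle T) :
        (θ.toCircle : ℂ) * z ∈ A ↔ ((θ + α).toCircle : ℂ) ∈ A := by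
      rw [← hcone ‖z‖ (norm_pos_iff.2 hz) ((θ + α).toCircle : ℂ), AddCircle.toCircle_add, hα,
        Circle.coe_mul, Circle.coe_exp, mul_left_comm, Complex.norm_mul_exp_arg_mul_I]
    simp only [hrotate]
    exact measure_preimage_add_right _ α {θ : AddCircle T | (θ.toCircle : ℂ) ∈ A}
  have hne : ∀ᵐ z ∂μ, z ≠ 0 := measure_eq_zero_iff_ae_notMem.1 hzero
  -- Average the invariance of `μ` over all rotations and exchange the order of integration.
  calc μ A = ∫⁻ θ : AddCircle T, μ {z | (θ.toCircle : ℂ) * z ∈ A} ∂AddCircle.haarAddCircle := by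
        have h (θ : AddCircle T) : μ {z | (θ.toCircle : ℂ) * z ∈ A} = μ A :=
          (hrot θ.toCircle).measure_preimage hA.nullMeasurableSet
        simp [h]
    _ = ∫⁻ z, AddCircle.haarAddCircle {θ : AddCircle T | (θ.toCircle : ℂ) * z ∈ A} ∂μ :=
        (Measure.prod_apply hmeas).symm.trans (Measure.prod_apply_symm hmeas)
    _ = AddCircle.haarAddCircle {θ : AddCircle T | (θ.toCircle : ℂ) ∈ A} := by
        rw [lintegral_congr_ae (hne.mono hfiber)]
        simp

theorem measure_eq_volume_exp_preimage_of_rotation_invariant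
    (hrot : ∀ c : Circle, MeasurePreserving (fun z : ℂ => c * z) μ μ) (hzero : μ {0} = 0)
    (hA : MeasurableSet A) (hcone : ∀ r : ℝ, 0 < r → ∀ z : ℂ, r * z ∈ A ↔ z ∈ A)
    (t₀ : ℝ) :
    μ A = volume {t ∈ Set.Ioc t₀ (t₀ + 2 * π) | (Circle.exp t : ℂ) ∈ A} /
      ENNReal.ofReal (2 * π) := by
  have hT : Fact (0 < 2 * π) := ⟨Real.two_pi_pos⟩
  have hS : MeasurableSet {θ : AddCircle (2 * π) | (θ.toCircle : ℂ) ∈ A} :=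
    (continuous_subtype_val.comp AddCircle.continuous_toCircle).measurable hA
  have hvol : volume {θ : AddCircle (2 * π) | (θ.toCircle : ℂ) ∈ A} =
      volume {t ∈ Set.Ioc t₀ (t₀ + 2 * π) | (Circle.exp t : ℂ) ∈ A} := by
    rw [← (AddCircle.measurePreserving_mk (2 * π) t₀).measure_preimage hS.nullMeasurableSet,
      Measure.restrict_apply (AddCircle.measurable_mk' hS), Set.inter_comm]
    simp only [Set.preimage_ofPred_eq, AddCircle.toCircle_apply_mk, div_self Real.two_pi_pos.ne',
      one_mul]
    rfl
  rw [measure_eq_haarAddCircle_of_rotation_invariant hrot hzero hA hcone (T := 2 * π), ← hvol,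
    AddCircle.volume_eq_smul_haarAddCircle, Measure.smul_apply, smul_eq_mul,
    mul_comm (ENNReal.ofReal _),
    ENNReal.mul_div_cancel_right (by simp [Real.pi_pos]) ENNReal.ofReal_ne_top]

end RotationInvariant

section StdGaussian

variable {E F ι : Type*} [NormedAddCommGroup E] [InnerProductSpace ℝ E]
  [NormedAddCommGroup F] [InnerProductSpace ℝ F]

theorem comp_pi_innerSL [Fintype ι] [DecidableEq ι] (φ : StrongDual ℝ (ι → ℝ)) (v : ι → E) :
    φ.comp (ContinuousLinearMap.pi fun i => innerSL ℝ (v i)) =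
      innerSL ℝ (∑ i, φ (Pi.single i 1) • v i) := by
  ext z
  have hz : (fun i => ⟪v i, z⟫) = ∑ i, ⟪v i, z⟫ • (Pi.single i 1 : ι → ℝ) :=
    pi_eq_sum_univ' _
  change φ (fun i => ⟪v i, z⟫) = ⟪∑ i, φ (Pi.single i 1) • v i, z⟫
  simp only [hz, map_sum, map_smul, smul_eq_mul, sum_inner, real_inner_smul_left, mul_comm]

theorem gram_eq_gram_complex (a b : E) (i j : Fin 2) :
    ⟪![a, b] i, ![a, b] j⟫ =
      ⟪![‖a‖ • (1 : ℂ), ‖b‖ • (Circle.exp (InnerProductGeometry.angle a b) : ℂ)] i,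
        ![‖a‖ • (1 : ℂ), ‖b‖ • (Circle.exp (InnerProductGeometry.angle a b) : ℂ)] j⟫ := by
  set φ := InnerProductGeometry.angle a b
  have hcos : ⟪(1 : ℂ), (Circle.exp φ : ℂ)⟫ = Real.cos φ := by
    simp [Complex.inner, Complex.exp_re]
  have hcos' : ⟪(Circle.exp φ : ℂ), (1 : ℂ)⟫ = Real.cos φ := by rw [real_inner_comm, hcos]
  have hab : ⟪a, b⟫ = ‖b‖ * (‖a‖ * Real.cos φ) := by
    rw [← InnerProductGeometry.cos_angle_mul_norm_mul_norm a b]; ring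
  have hba : ⟪b, a⟫ = ‖a‖ * (‖b‖ * Real.cos φ) := by
    rw [real_inner_comm, hab]; ring
  revert i j
  simp only [Fin.forall_fin_two, Matrix.cons_val_zero, Matrix.cons_val_one, real_inner_smul_left,
    real_inner_smul_right, real_inner_self_eq_norm_mul_norm, Circle.norm_coe, norm_one, hcos, hcos',
    hab, hba, mul_one, and_self]

variable [MeasurableSpace E] [BorelSpace E]

theorem measurableSet_inner_pos_inner_neg (a b : E) :
    MeasurableSet {z : E | 0 < ⟪a, z⟫ ∧ ⟪b, z⟫ < 0} := by
  have ha : Continuous fun z : E => ⟪a, z⟫ := by fun_prop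
  have hb : Continuous fun z : E => ⟪b, z⟫ := by fun_prop
  exact (measurableSet_lt measurable_const ha.measurable).inter
    (measurableSet_lt hb.measurable measurable_const)

variable [FiniteDimensional ℝ E]

theorem ae_inner_ne_zero_stdGaussian {a : E} (ha : a ≠ 0) : ∀ᵐ z ∂stdGaussian E, ⟪a, z⟫ ≠ 0 := by
  have hvar : Var[innerSL ℝ a; stdGaussian E].toNNReal ≠ 0 := by
    rw [variance_dual_stdGaussian, innerSL_apply_norm]
    simpa using ha
  have := nullSingletonClass_gaussianReal (μ := (stdGaussian E)[innerSL ℝ a]) hvar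
  rw [← IsGaussian.map_eq_gaussianReal] at this
  exact ae_of_ae_map (innerSL ℝ a).continuous.aemeasurable (Measure.ae_ne _ 0)

variable [FiniteDimensional ℝ F] [MeasurableSpace F] [BorelSpace F]

theorem map_stdGaussian_eq_map_stdGaussian {G : Type*} [NormedAddCommGroup G] [NormedSpace ℝ G]
    [CompleteSpace G] [SecondCountableTopology G] [MeasurableSpace G] [BorelSpace G]
    {L : E →L[ℝ] G} {M : F →L[ℝ] G} (h : ∀ φ : StrongDual ℝ G, ‖φ.comp L‖ = ‖φ.comp M‖) :
    (stdGaussian E).map L = (stdGaussian F).map M := by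
  refine Measure.ext_of_charFunDual (funext fun φ => ?_)
  rw [charFunDual_map, charFunDual_map, charFunDual_stdGaussian, charFunDual_stdGaussian, h]

theorem map_inner_stdGaussian_eq_of_gram_eq [Finite ι] {v : ι → E} {w : ι → F}
    (h : ∀ i j, ⟪v i, v j⟫ = ⟪w i, w j⟫) :
    (stdGaussian E).map (fun z i => ⟪v i, z⟫) = (stdGaussian F).map (fun z i => ⟪w i, z⟫) := by
  classical
  have := Fintype.ofFinite ι
  refine map_stdGaussian_eq_map_stdGaussian
    (L := ContinuousLinearMap.pi fun i => innerSL ℝ (v i))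
    (M := ContinuousLinearMap.pi fun i => innerSL ℝ (w i)) fun φ => ?_
  rw [comp_pi_innerSL, comp_pi_innerSL, innerSL_apply_norm, innerSL_apply_norm,
    norm_eq_sqrt_real_inner, norm_eq_sqrt_real_inner]
  simp only [sum_inner, inner_sum, real_inner_smul_left, real_inner_smul_right, h]

theorem measurePreserving_circle_mul_stdGaussian (c : Circle) :
    MeasurePreserving (fun z : ℂ => c * z) (stdGaussian ℂ) (stdGaussian ℂ) :=
  ⟨by fun_prop, stdGaussian_map (rotation c)⟩

theorem setOf_cos_pos_and_cos_sub_neg {φ : ℝ} (h₀ : 0 ≤ φ) (hπ : φ ≤ π) :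
    {t ∈ Set.Ioc (-(π / 2)) (-(π / 2) + 2 * π) | 0 < Real.cos t ∧ Real.cos (t - φ) < 0} =
      Set.Ioo (-(π / 2)) (φ - π / 2) := by
  ext t
  constructor
  · rintro ⟨⟨hlt, hle⟩, hpos, hneg⟩
    have ht : t < π / 2 := by
      contrapose! hpos
      exact Real.cos_nonpos_of_pi_div_two_le_of_le hpos (by linarith)
    refine ⟨hlt, ?_⟩
    contrapose! hneg
    exact Real.cos_nonneg_of_neg_pi_div_two_le_of_le (by linarith) (by linarith)
  · rintro ⟨hlt, hlt'⟩
    refine ⟨⟨hlt, by linarith⟩, Real.cos_pos_of_mem_Ioo ⟨hlt, by linarith⟩, ?_⟩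
    rw [← Real.cos_neg]
    exact Real.cos_neg_of_pi_div_two_lt_of_lt (by linarith) (by linarith)

theorem stdGaussian_complex_setOf_inner_pos_inner_neg {φ : ℝ} (h₀ : 0 ≤ φ) (hπ : φ ≤ π) :
    stdGaussian ℂ {z | 0 < ⟪(1 : ℂ), z⟫ ∧ ⟪(Circle.exp φ : ℂ), z⟫ < 0} =
      ENNReal.ofReal (φ / (2 * π)) := by
  have hzero : stdGaussian ℂ {0} = 0 :=
    measure_mono_null (by simp) (ae_iff.1 (ae_inner_ne_zero_stdGaussian (one_ne_zero (α := ℂ))))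
  have hexp (t : ℝ) :
      (Circle.exp t : ℂ) ∈ {z : ℂ | 0 < ⟪(1 : ℂ), z⟫ ∧ ⟪(Circle.exp φ : ℂ), z⟫ < 0} ↔
        0 < Real.cos t ∧ Real.cos (t - φ) < 0 := by
    simp [Complex.inner, Real.cos_sub, Complex.exp_re, Complex.exp_im, mul_comm]
  rw [measure_eq_volume_exp_preimage_of_rotation_invariant measurePreserving_circle_mul_stdGaussian
    hzero (measurableSet_inner_pos_inner_neg _ _) _ (-(π / 2))]
  · simp only [hexp]
    rw [setOf_cos_pos_and_cos_sub_neg h₀ hπ, Real.volume_Ioo,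
      ← ENNReal.ofReal_div_of_pos Real.two_pi_pos]
    ring_nf
  · intro r hr z
    simp only [Set.mem_ofPred_eq, ← Complex.real_smul, real_inner_smul_right,
      ← smul_eq_mul r, smul_pos_iff_of_pos_left hr, smul_neg_iff_of_pos_left hr]

theorem stdGaussian_setOf_inner_pos_inner_neg {a b : E} (ha : a ≠ 0) (hb : b ≠ 0) :
    stdGaussian E {z | 0 < ⟪a, z⟫ ∧ ⟪b, z⟫ < 0} =
      ENNReal.ofReal (InnerProductGeometry.angle a b / (2 * π)) := by
  have hmeas : MeasurableSet {x : Fin 2 → ℝ | 0 < x 0 ∧ x 1 < 0} :=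
    (measurableSet_lt measurable_const (measurable_pi_apply 0)).inter
      (measurableSet_lt (measurable_pi_apply 1) measurable_const)
  have hmap := congr($(map_inner_stdGaussian_eq_of_gram_eq (gram_eq_gram_complex a b))
    {x : Fin 2 → ℝ | 0 < x 0 ∧ x 1 < 0})
  rw [Measure.map_apply (by fun_prop) hmeas, Measure.map_apply (by fun_prop) hmeas] at hmap
  rw [← stdGaussian_complex_setOf_inner_pos_inner_neg (InnerProductGeometry.angle_nonneg a b)
    (InnerProductGeometry.angle_le_pi a b)]
  simpa only [Set.preimage_ofPred_eq, Matrix.cons_val_zero, Matrix.cons_val_one,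
    real_inner_smul_left, ← smul_eq_mul ‖_‖, smul_pos_iff_of_pos_left (norm_pos_iff.2 ha),
    smul_neg_iff_of_pos_left (norm_pos_iff.2 hb)] using hmap

theorem stdGaussian_real_sign_inner_ne {a b : E} (ha : a ≠ 0) (hb : b ≠ 0) :
    (stdGaussian E).real {z | Real.sign ⟪a, z⟫ ≠ Real.sign ⟪b, z⟫} =
      InnerProductGeometry.angle a b / π := by
  have hae : {z | Real.sign ⟪a, z⟫ ≠ Real.sign ⟪b, z⟫} =ᵐ[stdGaussian E]
      ({z | 0 < ⟪a, z⟫ ∧ ⟪b, z⟫ < 0} ∪ {z | 0 < ⟪b, z⟫ ∧ ⟪a, z⟫ < 0} : Set E) := by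
    filter_upwards [ae_inner_ne_zero_stdGaussian ha, ae_inner_ne_zero_stdGaussian hb] with z hza hzb
    refine propext ?_
    change Real.sign ⟪a, z⟫ ≠ Real.sign ⟪b, z⟫ ↔
      (0 < ⟪a, z⟫ ∧ ⟪b, z⟫ < 0) ∨ (0 < ⟪b, z⟫ ∧ ⟪a, z⟫ < 0)
    rcases hza.lt_or_gt with h | h <;> rcases hzb.lt_or_gt with h' | h' <;>
      norm_num [Real.sign_of_neg, Real.sign_of_pos, h, h', h.not_gt, h'.not_gt]
  have hdisj : Disjoint {z : E | 0 < ⟪a, z⟫ ∧ ⟪b, z⟫ < 0} {z | 0 < ⟪b, z⟫ ∧ ⟪a, z⟫ < 0} :=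
    Set.disjoint_left.2 fun z h h' => h.1.not_gt h'.2
  rw [measureReal_congr hae,
    measureReal_union hdisj (measurableSet_inner_pos_inner_neg b a), measureReal_def,
    measureReal_def, stdGaussian_setOf_inner_pos_inner_neg ha hb,
    stdGaussian_setOf_inner_pos_inner_neg hb ha, InnerProductGeometry.angle_comm b a,
    ENNReal.toReal_ofReal]
  · ring
  · have := InnerProductGeometry.angle_nonneg a b
    positivity

end StdGaussian

section ProductMixture

variable {ι : Type*} {X : ι → Type*} [∀ i, MeasurableSpace (X i)] [DecidableEq ι]

theorem sigmaFinite_piecewise (Ω : Finset ι) (μ ν : ∀ i, Measure (X i)) [∀ i, SigmaFinite (μ i)]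
    [∀ i, SigmaFinite (ν i)] (i : ι) : SigmaFinite (Ω.piecewise μ ν i) := by
  by_cases hi : i ∈ Ω <;> simp only [hi, not_false_eq_true, Finset.piecewise_eq_of_mem,
    Finset.piecewise_eq_of_notMem] <;> infer_instance

variable [Fintype ι]

theorem measure_pi_smul_add_smul (c d : ι → NNReal) (μ ν : ∀ i, Measure (X i))
    [∀ i, SigmaFinite (μ i)] [∀ i, SigmaFinite (ν i)] :
    Measure.pi (fun i => c i • μ i + d i • ν i) = ∑ Ω : Finset ι,
      ((∏ i ∈ Ω, c i) * ∏ i ∈ Ωᶜ, d i) • Measure.pi (Ω.piecewise μ ν) := by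
  have (Ω : Finset ι) := sigmaFinite_piecewise Ω μ ν
  refine Measure.pi_eq fun s _ => ?_
  simp only [Measure.finsetSum_apply, Measure.add_apply, Measure.smul_apply, Measure.pi_pi,
    Fintype.prod_add, ENNReal.smul_def, smul_eq_mul, Finset.prod_mul_distrib, ENNReal.coe_mul,
    ENNReal.ofNNReal_finsetProd]
  refine Finset.sum_congr rfl fun Ω _ => ?_
  have hin : ∏ i ∈ Ω, Ω.piecewise μ ν i (s i) = ∏ i ∈ Ω, μ i (s i) :=
    Finset.prod_congr rfl fun i hi => by rw [Finset.piecewise_eq_of_mem _ _ _ hi]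
  have hout : ∏ i ∈ Ωᶜ, Ω.piecewise μ ν i (s i) = ∏ i ∈ Ωᶜ, ν i (s i) :=
    Finset.prod_congr rfl fun i hi => by
      rw [Finset.piecewise_eq_of_notMem _ _ _ (Finset.mem_compl.1 hi)]
  rw [← Finset.prod_mul_prod_compl Ω fun i => Ω.piecewise μ ν i (s i), hin, hout, mul_mul_mul_comm]

theorem map_piecewise_measure_pi (Ω : Finset ι) (μ : ∀ i, Measure (X i))
    [∀ i, IsProbabilityMeasure (μ i)] (c : ∀ i, X i) :
    (Measure.pi μ).map (fun x => Ω.piecewise x c) =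
      Measure.pi (Ω.piecewise μ fun i => Measure.dirac (c i)) := by
  let f (i : ι) (x : X i) : X i := if i ∈ Ω then x else c i
  have hf (i : ι) : Measurable (f i) := by
    by_cases hi : i ∈ Ω <;> simp only [f, hi, if_true, if_false] <;> fun_prop
  have hmap (i : ι) : (μ i).map (f i) = Ω.piecewise μ (fun i => Measure.dirac (c i)) i := by
    by_cases hi : i ∈ Ω
    · simp [f, hi]
    · simp [f, hi, Measure.map_const]
  have (i : ι) : IsProbabilityMeasure ((μ i).map (f i)) :=
    Measure.isProbabilityMeasure_map (hf i).aemeasurable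
  exact (Measure.pi_map_pi fun i => (hf i).aemeasurable).trans (congrArg Measure.pi (funext hmap))

end ProductMixture

theorem ae_of_forall_measure_inter_support_eq_zero {ι M : Type*} [Finite ι] [Zero M]
    [MeasurableSpace M] {μ : Measure (ι → M)} {P : (ι → M) → Prop}
    (h : ∀ Ω : Finset ι, μ ({x | ¬ P x} ∩ {x | ∀ i, x i ≠ 0 ↔ i ∈ Ω}) = 0) : ∀ᵐ x ∂μ, P x := by
  classical
  have := Fintype.ofFinite ι
  refine measure_mono_null (fun x hx => ?_) (measure_iUnion_null h)
  exact Set.mem_iUnion.2 ⟨Finset.univ.filter (x · ≠ 0), hx, by simp⟩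

section BernoulliGaussian

theorem measurable_restrict {k : ℕ} (Ω : Finset (Fin k)) :
    Measurable fun z : Fin k → ℝ => restrict z Ω := by
  refine measurable_pi_lambda _ fun i => ?_
  by_cases hi : i ∈ Ω <;> simp only [_root_.restrict, hi, if_true, if_false] <;> fun_prop

theorem sum_mul_restrict {k : ℕ} (p z : Fin k → ℝ) (Ω : Finset (Fin k)) :
    ∑ i, p i * restrict z Ω i = ∑ i, restrict p Ω i * z i := by
  simp only [_root_.restrict, mul_ite, ite_mul, mul_zero, zero_mul]

theorem pi_bg (n : ℕ) (θ : ℝ) :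
    (Measure.pi fun _ : Fin n => bg θ) = ∑ Ω : Finset (Fin n),
      (θ.toNNReal ^ #Ω * (1 - θ).toNNReal ^ (n - #Ω)) •
        (Measure.pi fun _ => gaussianReal 0 1).map (fun z => restrict z Ω) := by
  simp only [bg, add_comm ((1 - θ).toNNReal • _), measure_pi_smul_add_smul,
    ← map_piecewise_measure_pi, Finset.prod_const, Finset.card_compl, Fintype.card_fin]
  rfl

theorem pi_bg_real_apply {n : ℕ} {θ : ℝ} (hθ : θ ∈ Set.Icc 0 1) {T : Set (Fin n → ℝ)}
    (hT : MeasurableSet T) :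
    (Measure.pi fun _ : Fin n => bg θ).real T = ∑ Ω : Finset (Fin n), θ ^ #Ω * (1 - θ) ^ (n - #Ω) *
      (Measure.pi fun _ => gaussianReal 0 1).real {z | restrict z Ω ∈ T} := by
  rw [pi_bg, measureReal_def, Measure.finsetSum_apply, ENNReal.toReal_sum]
  · refine Finset.sum_congr rfl fun Ω _ => ?_
    rw [← measureReal_def, measureReal_nnreal_smul_apply,
      map_measureReal_apply (measurable_restrict Ω) hT]
    simp [hθ.1, hθ.2, Set.preimage]
  · intro Ω _
    have := Measure.isProbabilityMeasure_map (μ := Measure.pi fun _ : Fin n => gaussianReal 0 1)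
      (measurable_restrict Ω).aemeasurable
    finiteness

theorem ae_restrict_of_ae_pi_bg {n : ℕ} {θ : ℝ} (hθ : θ ∈ Set.Icc 0 1) {P : (Fin n → ℝ) → Prop}
    (h : ∀ᵐ x ∂(Measure.pi fun _ : Fin n => bg θ), P x) {Ω : Finset (Fin n)}
    (hΩ : θ ^ #Ω * (1 - θ) ^ (n - #Ω) ≠ 0) :
    ∀ᵐ z ∂(Measure.pi fun _ : Fin n => gaussianReal 0 1), P (restrict z Ω) := by
  rw [pi_bg, ae_finsetSum_measure_iff] at h
  refine ae_of_ae_map (measurable_restrict Ω).aemeasurable ?_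
  refine (Measure.ae_smul_measure_iff ?_).1 (h Ω (Finset.mem_univ Ω))
  rw [← NNReal.coe_ne_zero]
  simpa [hθ.1, hθ.2] using hΩ

end BernoulliGaussian

section Coordinates

theorem measurable_real_sign : Measurable Real.sign := by
  refine Measurable.ite measurableSet_Iio measurable_const ?_
  exact Measurable.ite measurableSet_Ioi measurable_const measurable_const

theorem measurableSet_real_sign_ne {α : Type*} [MeasurableSpace α] {f g : α → ℝ}
    (hf : Measurable f) (hg : Measurable g) :
    MeasurableSet {x | Real.sign (f x) ≠ Real.sign (g x)} :=
  (measurableSet_eq_fun (measurable_real_sign.comp hf) (measurable_real_sign.comp hg)).compl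

theorem sum_mul_eq_inner_toLp {ι : Type*} [Fintype ι] (x y : ι → ℝ) :
    ∑ i, x i * y i = ⟪WithLp.toLp 2 x, WithLp.toLp 2 y⟫ := by
  simp [PiLp.inner_apply, mul_comm]

theorem ang_eq_angle_toLp {k : ℕ} {x y : Fin k → ℝ} (hx : x ≠ 0) (hy : y ≠ 0) :
    ang x y = InnerProductGeometry.angle (WithLp.toLp 2 x) (WithLp.toLp 2 y) := by
  rw [ang, if_neg (by simp [hx, hy]), InnerProductGeometry.angle, sum_mul_eq_inner_toLp,
    EuclideanSpace.norm_eq, EuclideanSpace.norm_eq]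
  simp only [Real.norm_eq_abs, sq_abs]

theorem ae_sum_mul_ne_zero {ι : Type*} [Fintype ι] {a : ι → ℝ} (ha : a ≠ 0) :
    ∀ᵐ z ∂(Measure.pi fun _ : ι => gaussianReal 0 1), ∑ i, a i * z i ≠ 0 := by
  have h := ae_inner_ne_zero_stdGaussian (a := WithLp.toLp 2 a) (by simpa using ha)
  rw [← map_pi_eq_stdGaussian] at h
  simpa only [sum_mul_eq_inner_toLp] using ae_of_ae_map (by fun_prop) h

theorem pi_gaussianReal_real_sign_ne {k : ℕ} {a b : Fin k → ℝ} (ha : a ≠ 0) (hb : b ≠ 0) :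
    (Measure.pi fun _ : Fin k => gaussianReal 0 1).real
      {z | Real.sign (∑ i, a i * z i) ≠ Real.sign (∑ i, b i * z i)} = ang a b / π := by
  rw [ang_eq_angle_toLp ha hb, ← stdGaussian_real_sign_inner_ne (by simpa using ha)
    (by simpa using hb), ← map_pi_eq_stdGaussian, map_measureReal_apply (by fun_prop)]
  · simp only [sum_mul_eq_inner_toLp, Set.preimage_ofPred_eq]
  · exact measurableSet_real_sign_ne (by fun_prop) (by fun_prop)

theorem pi_gaussianReal_real_sign_ne_of_ae_eq_zero_iff {k : ℕ} {a b : Fin k → ℝ}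
    (h : ∀ᵐ z ∂(Measure.pi fun _ : Fin k => gaussianReal 0 1),
      ∑ i, a i * z i = 0 ↔ ∑ i, b i * z i = 0) :
    (Measure.pi fun _ : Fin k => gaussianReal 0 1).real
      {z | Real.sign (∑ i, a i * z i) ≠ Real.sign (∑ i, b i * z i)} = ang a b / π := by
  have hzero : a = 0 ↔ b = 0 := by
    constructor
    · rintro rfl
      by_contra hb
      obtain ⟨z, hz, hbz⟩ := (h.and (ae_sum_mul_ne_zero hb)).exists
      exact hbz (hz.1 (by simp))
    · rintro rfl
      by_contra ha
      obtain ⟨z, hz, haz⟩ := (h.and (ae_sum_mul_ne_zero ha)).exists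
      exact haz (hz.2 (by simp))
  by_cases ha : a = 0
  · simp [ang, ha, hzero.1 ha]
  · exact pi_gaussianReal_real_sign_ne ha (mt hzero.2 ha)

end Coordinates

theorem stmt18_general {n : ℕ} {θ : ℝ} (hθ : θ ∈ Set.Icc (0 : ℝ) 1) {p q : Fin n → ℝ}
    (h : ∀ᵐ x ∂(Measure.pi fun _ : Fin n => bg θ), ∑ i, p i * x i = 0 ↔ ∑ i, q i * x i = 0) :
    (Measure.pi fun _ : Fin n => bg θ).real
        {x | Real.sign (∑ i, p i * x i) ≠ Real.sign (∑ i, q i * x i)} =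
      (1 / π) * ∑ Ω ∈ (Finset.univ : Finset (Fin n)).powerset,
        θ ^ #Ω * (1 - θ) ^ (n - #Ω) * ang (restrict p Ω) (restrict q Ω) := by
  rw [pi_bg_real_apply hθ (measurableSet_real_sign_ne (by fun_prop) (by fun_prop)),
    Finset.powerset_univ, Finset.mul_sum]
  refine Finset.sum_congr rfl fun Ω _ => ?_
  rcases eq_or_ne (θ ^ #Ω * (1 - θ) ^ (n - #Ω)) 0 with hΩ | hΩ
  · simp only [hΩ, zero_mul, mul_zero]
  have hΩae := ae_restrict_of_ae_pi_bg hθ h hΩ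
  simp only [sum_mul_restrict] at hΩae
  simp only [Set.mem_ofPred_eq, sum_mul_restrict,
    pi_gaussianReal_real_sign_ne_of_ae_eq_zero_iff hΩae]
  ring

/-- For x with i.i.d. BG(θ) entries and unit vectors p, q, provided events
    where exactly one of ⟨p,x⟩, ⟨q,x⟩ vanishes have probability zero
    conditional on each support Ω, one has
    P(sign⟨p,x⟩ ≠ sign⟨q,x⟩) = (1/π)·E_Ω[angle(p_Ω, q_Ω)]. -/
theorem stmt18 (n : ℕ) (θ : ℝ) (hθ : θ ∈ Set.Ioo (0 : ℝ) 1)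
    (p q : Fin n → ℝ)
    (hp : Real.sqrt (∑ i, p i ^ 2) = 1) (hq : Real.sqrt (∑ i, q i ^ 2) = 1)
    (hnull : ∀ Ω : Finset (Fin n),
      (Measure.pi fun _ : Fin n => bg θ)
        ({x | ((∑ i, p i * x i) = 0) ≠ ((∑ i, q i * x i) = 0)} ∩
          {x | ∀ i, x i ≠ 0 ↔ i ∈ Ω}) = 0) :
    ((Measure.pi fun _ : Fin n => bg θ)
        {x | Real.sign (∑ i, p i * x i) ≠ Real.sign (∑ i, q i * x i)}).toReal =
      (1 / Real.pi) * ∑ Ω ∈ (Finset.univ : Finset (Fin n)).powerset,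
        θ ^ Ω.card * (1 - θ) ^ (n - Ω.card) * ang (restrict p Ω) (restrict q Ω) :=
  stmt18_general (Set.Ioo_subset_Icc_self hθ)
    (ae_of_forall_measure_inter_support_eq_zero (by simpa only [ne_eq, eq_iff_iff] using hnull))
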